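/- arXiv:2306.07161 — 2 statements merged into one kernel-verified Lean document; each statement's English description precedes it below -/
import Mathlib

section
/- Assume n ≥ 2 and d ≥ 2, and fix an integer x such that x ≤ n + ⌈d/2⌉ − 1. Then T(n,d;x) = ∅. -/
open MvPolynomial

noncomputable section

/-- Projective `n`-space over `k`, as the projectivization of `k^(n+1)`. -/
abbrev ProjSpace (k : Type*) [Field k] (n : ℕ) := Projectivization k (Fin (n+1) → k)

variable (k : Type*) [Field k]

/-- Evaluation at a vector, as a linear map on polynomials. -/
def evalLM {n : ℕ} (v : Fin n → k) : MvPolynomial (Fin n) k →ₗ[k] k :=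
  (MvPolynomial.aeval v).toLinearMap

/-- The submodule of polynomials vanishing together with all first partial derivatives at `v`. -/
def doubleVanishing {n : ℕ} (v : Fin n → k) : Submodule k (MvPolynomial (Fin n) k) :=
  LinearMap.ker (evalLM k v) ⊓
    ⨅ i : Fin n, LinearMap.ker ((evalLM k v).comp (MvPolynomial.pderiv i).toLinearMap)

/-- `h^0(I_{2S}(d))`: dimension of degree-`d` forms vanishing doubly at all points of `S`. -/
def h0 (n d : ℕ) (S : Finset (ProjSpace k n)) : ℕ :=
  Module.finrank k
    ↥(homogeneousSubmodule (Fin (n+1)) k d ⊓ ⨅ p ∈ S, doubleVanishing k p.rep)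

/-- `h^1(I_{2S}(d)) = h^0(I_{2S}(d)) + (n+1)#S - C(n+d,n)`. -/
def h1 (n d : ℕ) (S : Finset (ProjSpace k n)) : ℤ :=
  (h0 k n d S : ℤ) + (n+1) * S.card - (n+d).choose n

/-- `S` spans `P^n`: it is contained in no hyperplane. -/
def Spans (n : ℕ) (S : Finset (ProjSpace k n)) : Prop :=
  Submodule.span k (Projectivization.rep '' (S : Set (ProjSpace k n))) = ⊤

/-- The Terracini locus `T(n,d;x)`. -/
def Terracini (n d x : ℕ) : Set (Finset (ProjSpace k n)) :=
  {S | S.card = x ∧ Spans k n S ∧ 0 < h0 k n d S ∧ 0 < h1 k n d S}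

/-- The minimally Terracini locus `T(n,d;x)'`. -/
def minTerracini (n d x : ℕ) : Set (Finset (ProjSpace k n)) :=
  {S | S ∈ Terracini k n d x ∧ ∀ A : Finset (ProjSpace k n), A ⊂ S → h1 k n d A = 0}

end

/-!
Two observations produce enough forms of degree `d`.

* If `G` is a form of degree `d - 1` that does not vanish at `p`, then the products `G * ℓ`, for `ℓ`
  a linear form, have distinct first-order jets at `p`: `G * ℓ` is singular at `p` only if
  `ℓ(p) = 0` and `G(p) ∇ℓ = 0`. If moreover `G` is singular at the other points of `S`, then so are
  these products. Such a `G` for every `p ∈ S` yields `(n + 1) * #S` independent forms whose span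
  meets `H⁰(I_{2S}(d))` trivially, so `h¹ ≤ 0`.
* Since `S` spans, `n` points of `S` other than `p` lie on a hyperplane avoiding `p`. Multiplying by
  one linear form for each of the remaining `#S - n - 1` points gives a form `L` of degree `#S - n`
  that vanishes on `S \ {p}` and not at `p`. Then `G` is `L ^ 2` times a power of a linear form, and
  the degrees fit as soon as `2 (#S - n) ≤ d - 1`.
-/

section LinearAlgebra

variable {k V ι : Type*} [DivisionRing k] [AddCommGroup V] [Module k V]

theorem exists_subset_erase_card_add_one_eq_finrank [DecidableEq ι] {v : ι → V} {S : Finset ι}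
    (hS : Submodule.span k (v '' (S : Set ι)) = ⊤) {i : ι} (hi : i ∈ S) (hvi : v i ≠ 0) :
    ∃ A ⊆ S.erase i, A.card + 1 = Module.finrank k V ∧
      v i ∉ Submodule.span k (v '' (A : Set ι)) := by
  classical
  have hsingleton : LinearIndepOn k v {i} := by simpa using hvi
  obtain ⟨b, hbS, hib, hspan, hb⟩ :=
    exists_linearIndepOn_extension hsingleton (Set.singleton_subset_iff.2 (Finset.mem_coe.2 hi))
  lift b to Finset ι using S.finite_toSet.subset hbS
  rw [Finset.coe_subset] at hbS
  rw [Set.singleton_subset_iff, Finset.mem_coe] at hib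
  have hbtop : Submodule.span k (v '' (b : Set ι)) = ⊤ :=
    top_unique (hS ▸ Submodule.span_le.2 hspan)
  have hbcard : b.card = Module.finrank k V := by
    have hfinrank := finrank_span_finset_eq_card (R := k) (s := b.image v)
      (by simpa only [Finset.coe_image] using hb.id_image)
    rw [Finset.coe_image, hbtop, finrank_top, Finset.card_image_of_injOn hb.injOn] at hfinrank
    exact hfinrank.symm
  refine ⟨b.erase i, Finset.erase_subset_erase i hbS, ?_, ?_⟩
  · rw [Finset.card_erase_add_one hib, hbcard]
  · rw [Finset.coe_erase]
    exact hb.notMem_span hib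

theorem rep_notMem_span_singleton_rep {p q : Projectivization k V} (hqp : q ≠ p) :
    p.rep ∉ Submodule.span k {q.rep} := by
  intro hmem
  obtain ⟨a, ha⟩ := Submodule.mem_span_singleton.1 hmem
  have hmk := (Projectivization.mk_eq_mk_iff' k _ _ p.rep_nonzero q.rep_nonzero).2 ⟨a, ha⟩
  rw [p.mk_rep, q.mk_rep] at hmk
  exact hqp hmk.symm

end LinearAlgebra

section LinearForm

variable {R σ : Type*} [CommSemiring R] [Fintype σ] [DecidableEq σ]

/-- The homogeneous polynomial of degree one attached to a functional on `R ^ σ`: the coefficient of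
`X i` is the value of the functional at the `i`-th standard basis vector. -/
noncomputable def linearForm : Module.Dual R (σ → R) →ₗ[R] MvPolynomial σ R where
  toFun φ := ∑ i, φ (Pi.single i 1) • X i
  map_add' φ ψ := by simp only [LinearMap.add_apply, add_smul, Finset.sum_add_distrib]
  map_smul' c φ := by
    simp only [LinearMap.smul_apply, smul_assoc, Finset.smul_sum, RingHom.id_apply]

theorem linearForm_apply (φ : Module.Dual R (σ → R)) :
    linearForm φ = ∑ i, φ (Pi.single i 1) • (X i : MvPolynomial σ R) := rfl

theorem isHomogeneous_linearForm (φ : Module.Dual R (σ → R)) : (linearForm φ).IsHomogeneous 1 :=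
  (homogeneousSubmodule σ R 1).sum_mem fun i _ ↦ Submodule.smul_mem _ _ (isHomogeneous_X R i)

theorem aeval_linearForm (φ : Module.Dual R (σ → R)) (v : σ → R) :
    aeval v (linearForm φ) = φ v := by
  conv_rhs => rw [← Finset.univ_sum_single v, map_sum]
  simp only [linearForm_apply, map_sum, map_smul, aeval_X]
  refine Finset.sum_congr rfl fun i _ ↦ ?_
  rw [smul_eq_mul, mul_comm, ← smul_eq_mul, ← map_smul, ← Pi.single_smul, smul_eq_mul, mul_one]

theorem pderiv_linearForm (φ : Module.Dual R (σ → R)) (i : σ) :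
    pderiv i (linearForm φ) = C (φ (Pi.single i 1)) := by
  simp [linearForm_apply, pderiv_X, Pi.single_apply, smul_eq_C_mul]

end LinearForm

theorem finrank_homogeneousSubmodule (R σ : Type*) [CommRing R] [Nontrivial R] [Fintype σ] (d : ℕ) :
    Module.finrank R (homogeneousSubmodule σ R d) = (Fintype.card σ).multichoose d := by
  classical
  let monomialEquiv : Sym σ d ≃ {P : σ →₀ ℕ | P.degree = d} := Sym.equivNatSum σ d
  rw [homogeneousSubmodule_eq_finsupp_supported, ← Sym.card_sym_eq_multichoose]
  exact Module.finrank_eq_card_basis ((basisRestrictSupport R _).reindex monomialEquiv.symm)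

section Separation

variable {k σ : Type*} [Field k]

theorem exists_isHomogeneous_one_aeval_ne_zero [Finite σ] (P : Submodule k (σ → k)) {v : σ → k}
    (hv : v ∉ P) :
    ∃ f : MvPolynomial σ k, f.IsHomogeneous 1 ∧ aeval v f ≠ 0 ∧ ∀ w ∈ P, aeval w f = 0 := by
  classical
  have := Fintype.ofFinite σ
  obtain ⟨φ, hφv, hφP⟩ := Submodule.exists_le_ker_of_notMem hv
  exact ⟨linearForm φ, isHomogeneous_linearForm φ, by rwa [aeval_linearForm],
    fun w hw ↦ by rw [aeval_linearForm]; exact hφP hw⟩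

theorem exists_isHomogeneous_card_aeval_rep_ne_zero [Finite σ]
    (T : Finset (Projectivization k (σ → k))) {p : Projectivization k (σ → k)} (hp : p ∉ T) :
    ∃ f : MvPolynomial σ k, f.IsHomogeneous T.card ∧ aeval p.rep f ≠ 0 ∧
      ∀ q ∈ T, aeval q.rep f = 0 := by
  have hline (q : T) := exists_isHomogeneous_one_aeval_ne_zero (Submodule.span k {q.1.rep})
    (rep_notMem_span_singleton_rep (ne_of_mem_of_not_mem q.2 hp))
  choose f hf hfp hfq using hline
  refine ⟨∏ q, f q, ?_, ?_, fun q hq ↦ ?_⟩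
  · simpa using IsHomogeneous.prod Finset.univ f (fun _ ↦ 1) fun q _ ↦ hf q
  · rw [map_prod]
    exact Finset.prod_ne_zero_iff.2 fun q _ ↦ hfp q
  · rw [map_prod]
    exact Finset.prod_eq_zero (Finset.mem_univ ⟨q, hq⟩)
      (hfq ⟨q, hq⟩ _ (Submodule.mem_span_singleton_self _))

theorem exists_isHomogeneous_aeval_rep_ne_zero_of_span_eq_top [Fintype σ]
    {S : Finset (Projectivization k (σ → k))}
    (hS : Submodule.span k (Projectivization.rep '' (S : Set (Projectivization k (σ → k)))) = ⊤)
    {p : Projectivization k (σ → k)} (hp : p ∈ S) :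
    ∃ f : MvPolynomial σ k, f.IsHomogeneous (S.card + 1 - Fintype.card σ) ∧ aeval p.rep f ≠ 0 ∧
      ∀ q ∈ S, q ≠ p → aeval q.rep f = 0 := by
  classical
  obtain ⟨A, hAS, hAcard, hpA⟩ :=
    exists_subset_erase_card_add_one_eq_finrank hS hp p.rep_nonzero
  obtain ⟨g, hg, hgp, hgA⟩ := exists_isHomogeneous_one_aeval_ne_zero _ hpA
  obtain ⟨f, hf, hfp, hfq⟩ :=
    exists_isHomogeneous_card_aeval_rep_ne_zero (S.erase p \ A) (p := p) (by simp)
  refine ⟨g * f, ?_, ?_, fun q hqS hqp ↦ ?_⟩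
  · have hrest := Finset.card_sdiff_add_card_eq_card hAS
    have herase := Finset.card_erase_add_one hp
    rw [Module.finrank_fintype_fun_eq_card] at hAcard
    convert hg.mul hf using 1
    omega
  · rw [map_mul]
    exact mul_ne_zero hgp hfp
  · rw [map_mul, mul_eq_zero]
    by_cases hqA : q ∈ A
    · exact .inl (hgA _ (Submodule.subset_span (Set.mem_image_of_mem _ hqA)))
    · exact .inr (hfq q (by simp [hqA, hqS, hqp]))

end Separation

section DoubleVanishing

variable {k : Type*} [Field k] {m : ℕ} {v : Fin m → k} {f g : MvPolynomial (Fin m) k}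

theorem mem_doubleVanishing_iff :
    f ∈ doubleVanishing k v ↔ aeval v f = 0 ∧ ∀ i, aeval v (pderiv i f) = 0 := by
  simp [doubleVanishing, evalLM]

theorem mul_mem_doubleVanishing (hf : aeval v f = 0) (hg : aeval v g = 0) :
    f * g ∈ doubleVanishing k v := by
  simp only [mem_doubleVanishing_iff, Derivation.leibniz, smul_eq_mul, map_add, map_mul, hf, hg,
    zero_mul, add_zero, implies_true, and_self]

theorem mul_mem_doubleVanishing_of_left_mem (hf : f ∈ doubleVanishing k v)
    (g : MvPolynomial (Fin m) k) : f * g ∈ doubleVanishing k v := by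
  obtain ⟨hf, hf'⟩ := mem_doubleVanishing_iff.1 hf
  simp only [mem_doubleVanishing_iff, Derivation.leibniz, smul_eq_mul, map_add, map_mul, hf, hf',
    zero_mul, mul_zero, add_zero, implies_true, and_self]

theorem eq_zero_of_mul_linearForm_mem_doubleVanishing {φ : Module.Dual k (Fin m → k)}
    (hf : aeval v f ≠ 0) (hmem : f * linearForm φ ∈ doubleVanishing k v) : φ = 0 := by
  obtain ⟨hval, hderiv⟩ := mem_doubleVanishing_iff.1 hmem
  have hφv : aeval v (linearForm φ) = 0 := by
    rw [map_mul] at hval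
    exact (mul_eq_zero.1 hval).resolve_left hf
  refine LinearMap.pi_ext' fun i ↦ LinearMap.ext_ring ?_
  have hφi := hderiv i
  rw [Derivation.leibniz, pderiv_linearForm, smul_eq_mul, smul_eq_mul, map_add, map_mul, map_mul,
    hφv, zero_mul, add_zero, aeval_C] at hφi
  exact (mul_eq_zero.1 hφi).resolve_left hf

theorem exists_isHomogeneous_mem_doubleVanishing_rep {e : ℕ}
    {S : Finset (Projectivization k (Fin m → k))}
    (hS : Submodule.span k (Projectivization.rep '' (S : Set (Projectivization k (Fin m → k)))) = ⊤)
    (hcard : 2 * (S.card + 1) ≤ 2 * m + e) {p : Projectivization k (Fin m → k)} (hp : p ∈ S) :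
    ∃ G : MvPolynomial (Fin m) k, G.IsHomogeneous e ∧ aeval p.rep G ≠ 0 ∧
      ∀ q ∈ S, q ≠ p → G ∈ doubleVanishing k q.rep := by
  obtain ⟨L, hL, hLp, hLq⟩ := exists_isHomogeneous_aeval_rep_ne_zero_of_span_eq_top hS hp
  obtain ⟨g, hg, hgp, -⟩ := exists_isHomogeneous_one_aeval_ne_zero ⊥ (by simpa using p.rep_nonzero)
  rw [Fintype.card_fin] at hL
  refine ⟨L * L * g ^ (e - 2 * (S.card + 1 - m)), ?_, ?_, fun q hqS hqp ↦ ?_⟩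
  · convert (hL.mul hL).mul (hg.pow (e - 2 * (S.card + 1 - m))) using 1
    omega
  · rw [map_mul, map_mul, map_pow]
    exact mul_ne_zero (mul_ne_zero hLp hLp) (pow_ne_zero _ hgp)
  · have hLL : L * L ∈ doubleVanishing k q.rep :=
      mul_mem_doubleVanishing (hLq q hqS hqp) (hLq q hqS hqp)
    exact mul_mem_doubleVanishing_of_left_mem hLL _

end DoubleVanishing

section LinearFormCombination

variable {k ι : Type*} [Field k] [Fintype ι] {m e : ℕ} {v : ι → Fin m → k}
  {G : ι → MvPolynomial (Fin m) k}

/-- The map sending a family of functionals `φ i` to `∑ i, G i * ℓ i`, where `ℓ i` is the linear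
form of `φ i`. When the `G i` separate given points, it embeds the families `φ` as forms
independent of those singular at these points. -/
noncomputable def linearFormCombination (G : ι → MvPolynomial (Fin m) k) :
    (ι → Module.Dual k (Fin m → k)) →ₗ[k] MvPolynomial (Fin m) k :=
  ∑ i, LinearMap.mulLeft k (G i) ∘ₗ linearForm ∘ₗ LinearMap.proj i

theorem linearFormCombination_apply (φ : ι → Module.Dual k (Fin m → k)) :
    linearFormCombination G φ = ∑ i, G i * linearForm (φ i) := by
  simp [linearFormCombination]

theorem range_linearFormCombination_le (hG : ∀ i, (G i).IsHomogeneous e) :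
    LinearMap.range (linearFormCombination G) ≤ homogeneousSubmodule (Fin m) k (e + 1) := by
  rintro _ ⟨φ, rfl⟩
  rw [linearFormCombination_apply]
  exact Submodule.sum_mem _ fun i _ ↦ (hG i).mul (isHomogeneous_linearForm (φ i))

theorem eq_zero_of_linearFormCombination_mem (hGv : ∀ i, aeval (v i) (G i) ≠ 0)
    (hG : ∀ i j, j ≠ i → G i ∈ doubleVanishing k (v j)) {φ : ι → Module.Dual k (Fin m → k)}
    (hφ : linearFormCombination G φ ∈ ⨅ i, doubleVanishing k (v i)) : φ = 0 := by
  classical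
  funext i
  have hsum := (Submodule.mem_iInf _).1 hφ i
  rw [linearFormCombination_apply, ← Finset.add_sum_erase _ _ (Finset.mem_univ i)] at hsum
  have hothers : ∑ j ∈ Finset.univ.erase i, G j * linearForm (φ j) ∈ doubleVanishing k (v i) :=
    Submodule.sum_mem _ fun j hj ↦
      mul_mem_doubleVanishing_of_left_mem (hG j i (Finset.ne_of_mem_erase hj).symm) _
  exact eq_zero_of_mul_linearForm_mem_doubleVanishing (hGv i)
    ((Submodule.add_mem_iff_left _ hothers).1 hsum)

theorem finrank_add_card_mul_le_finrank_homogeneousSubmodule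
    (hGe : ∀ i, (G i).IsHomogeneous e) (hGv : ∀ i, aeval (v i) (G i) ≠ 0)
    (hG : ∀ i j, j ≠ i → G i ∈ doubleVanishing k (v j)) :
    Module.finrank k ↥(homogeneousSubmodule (Fin m) k (e + 1) ⊓ ⨅ i, doubleVanishing k (v i)) +
      Fintype.card ι * m ≤ Module.finrank k (homogeneousSubmodule (Fin m) k (e + 1)) := by
  set V := homogeneousSubmodule (Fin m) k (e + 1)
  set K := V ⊓ ⨅ i, doubleVanishing k (v i)
  set W := LinearMap.range (linearFormCombination G)
  have hWV : W ≤ V := range_linearFormCombination_le hGe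
  have : FiniteDimensional k V := .of_fg (homogeneousSubmodule_fg (Fin m) k (e + 1))
  have : FiniteDimensional k K := Submodule.finiteDimensional_of_le inf_le_left
  have hinj : Function.Injective (linearFormCombination G) :=
    (injective_iff_map_eq_zero _).2 fun φ hφ ↦
      eq_zero_of_linearFormCombination_mem hGv hG (hφ ▸ Submodule.zero_mem _)
  have hdisj : K ⊓ W = ⊥ := by
    rw [Submodule.eq_bot_iff]
    rintro _ ⟨hK, φ, rfl⟩
    rw [eq_zero_of_linearFormCombination_mem hGv hG hK.2, map_zero]
  have hW : Module.finrank k W = Fintype.card ι * m := by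
    simp [W, LinearMap.finrank_range_of_inj hinj, Module.finrank_pi_fintype,
      Subspace.dual_finrank_eq]
  calc Module.finrank k K + Fintype.card ι * m
      = Module.finrank k ↥(K ⊔ W) := by
        rw [← hW, ← Submodule.finrank_sup_add_finrank_inf_eq, hdisj, finrank_bot, add_zero]
    _ ≤ Module.finrank k V := Submodule.finrank_mono (sup_le inf_le_left hWV)

end LinearFormCombination

section Spans

variable {k : Type*} [Field k] {n d : ℕ} {S : Finset (ProjSpace k n)}

theorem Spans.lt_card (hS : Spans k n S) : n < S.card := by
  classical
  have hle := finrank_span_finset_le_card (R := k) (S.image Projectivization.rep)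
  rw [Finset.coe_image, Set.finrank, hS, finrank_top, Module.finrank_fin_fun] at hle
  exact hle.trans Finset.card_image_le

theorem Spans.h1_nonpos (hS : Spans k n S) (hcard : 2 * S.card < 2 * n + d) : h1 k n d S ≤ 0 := by
  obtain ⟨e, rfl⟩ : ∃ e, d = e + 1 := Nat.exists_eq_add_one.2 (by have := hS.lt_card; omega)
  have hsep (p : S) := exists_isHomogeneous_mem_doubleVanishing_rep (e := e) hS (by omega) p.2
  choose G hGe hGp hG using hsep
  have hle := finrank_add_card_mul_le_finrank_homogeneousSubmodule
    (v := fun p : S ↦ p.1.rep) hGe hGp fun p q hqp ↦ hG p q q.2 (Subtype.coe_ne_coe.2 hqp)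
  rw [finrank_homogeneousSubmodule, Fintype.card_fin, Fintype.card_coe, Nat.multichoose_eq,
    Nat.add_right_comm n 1, Nat.add_sub_cancel, ← Nat.choose_symm_add] at hle
  rw [h1, h0, iInf_subtype', sub_nonpos, mul_comm]
  exact_mod_cast hle

end Spans

theorem terracini_empty_small_x_general (k : Type*) [Field k] (n d x : ℕ)
    (hx : x < n + (d + 1) / 2) : Terracini k n d x = ∅ := by
  rw [Set.eq_empty_iff_forall_notMem]
  rintro S ⟨rfl, hS, -, hpos⟩
  exact hpos.not_ge (hS.h1_nonpos (by omega))

/-- Proposition: for `n ≥ 2`, `d ≥ 2` and `x ≤ n + ⌈d/2⌉ - 1`, `T(n,d;x) = ∅`. -/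
theorem terracini_empty_small_x
    (k : Type*) [Field k] [IsAlgClosed k] [CharZero k]
    (n d x : ℕ) (hn : 2 ≤ n) (hd : 2 ≤ d) (hx : x ≤ n + (d + 1) / 2 - 1) :
    Terracini k n d x = ∅ :=
  terracini_empty_small_x_general k n d x (by omega)
end

section
/- Let S ∈ T(n,d;x)' be a minimally Terracini set. Then h^1(I_{2S}(d)) ≤ n+1. -/
open MvPolynomial

section

variable {k : Type*} [Field k] {n : ℕ}

theorem Spans.nonempty {S : Finset (ProjSpace k n)} (hS : Spans k n S) : S.Nonempty := by
  rw [Finset.nonempty_iff_ne_empty]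
  rintro rfl
  simp [Spans] at hS

theorem h0_antitone (d : ℕ) : Antitone (h0 k n d) := by
  intro A S hAS
  have : Module.Finite k (homogeneousSubmodule (Fin (n + 1)) k d) :=
    Module.Finite.iff_fg.2 (homogeneousSubmodule_fg _ _ d)
  have : Module.Finite k
      ↥(homogeneousSubmodule (Fin (n + 1)) k d ⊓ ⨅ p ∈ A, doubleVanishing k p.rep) :=
    Submodule.finiteDimensional_of_le inf_le_left
  exact Submodule.finrank_mono (inf_le_inf_left _ (biInf_mono hAS))

theorem h1_le_h1_add_mul_card_sub_card (d : ℕ) {A S : Finset (ProjSpace k n)} (hAS : A ⊆ S) :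
    h1 k n d S ≤ h1 k n d A + (n + 1) * ((S.card : ℤ) - A.card) := by
  have h0_le : (h0 k n d S : ℤ) ≤ h0 k n d A := mod_cast h0_antitone d hAS
  unfold h1
  linarith

theorem minTerracini_h1_le_general (d : ℕ) [DecidableEq (ProjSpace k n)]
    {S : Finset (ProjSpace k n)} {p : ProjSpace k n} (hp : p ∈ S)
    (h1_erase : h1 k n d (S.erase p) = 0) : h1 k n d S ≤ (n : ℤ) + 1 := by
  have card_diff : (S.card : ℤ) - (S.erase p).card = 1 := by
    have := Finset.card_erase_add_one hp
    lia
  simpa [h1_erase, card_diff] using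
    h1_le_h1_add_mul_card_sub_card d (Finset.erase_subset p S)

end

/-- Remark: if `S ∈ T(n,d;x)'` then `h^1(I_{2S}(d)) ≤ n+1`. -/
theorem minTerracini_h1_le
    (k : Type*) [Field k] [IsAlgClosed k] [CharZero k]
    (n d x : ℕ) (S : Finset (ProjSpace k n)) (hS : S ∈ minTerracini k n d x) :
    h1 k n d S ≤ (n : ℤ) + 1 := by
  classical
  obtain ⟨p, hp⟩ := hS.1.2.1.nonempty
  exact minTerracini_h1_le_general d hp (hS.2 _ (Finset.erase_ssubset hp))
end
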